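/- Suppose m is an odd positive integer. Then lim_{n→∞} μ([0,n] \ σ(L(Q))) / μ(σ(L(Q)) ∩ [0,n]) = 0, where μ denotes Lebesgue measure on ℝ; that is, the real component of the spectrum of L(Q) contains the main part of [0,∞). -/

import Mathlib

open MeasureTheory Set Filter Topology Metric

open scoped Classical

noncomputable section

/-- The Bloch phase factor `e^{iπt}`. -/
def blochPhase (t : ℝ) : ℂ := Complex.exp (Complex.I * Real.pi * t)

/-- `Ψ` is a Bloch function of `L_t(Q)` with Bloch eigenvalue `lam`:
nonzero, twice continuously differentiable, satisfies `-Ψ'' + QΨ = lam Ψ`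
and `Ψ(x+π) = e^{iπt} Ψ(x)`. -/
def IsBlochPair {m : ℕ} (Q : ℝ → Matrix (Fin m) (Fin m) ℂ) (t : ℝ) (lam : ℂ)
    (Ψ : ℝ → Fin m → ℂ) : Prop :=
  Ψ ≠ 0 ∧ ContDiff ℝ 2 Ψ ∧
    (∀ x : ℝ, -(deriv (deriv Ψ) x) + (Q x).mulVec (Ψ x) = lam • Ψ x) ∧
    (∀ x : ℝ, Ψ (x + Real.pi) = blochPhase t • Ψ x)

/-- `lam` is a Bloch eigenvalue of `L_t(Q)`. -/
def IsBlochEigenvalue {m : ℕ} (Q : ℝ → Matrix (Fin m) (Fin m) ℂ) (t : ℝ) (lam : ℂ) : Prop :=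
  ∃ Ψ, IsBlochPair Q t lam Ψ

/-- `Ψ` is normalized: `∫₀^π |Ψ(x)|² dx = 1` (Euclidean norm on `ℂ^m`). -/
def IsNormalized {m : ℕ} (Ψ : ℝ → Fin m → ℂ) : Prop :=
  (∫ x in (0:ℝ)..Real.pi, ∑ i, ‖Ψ x i‖ ^ 2) = 1

/-- The index set `A(k,t)`. -/
def Akt (k : ℤ) (t : ℝ) : Set ℤ :=
  if t ∈ Set.Ioo (-(2:ℝ)/3) (-(1:ℝ)/3) ∪ Set.Ioo ((1:ℝ)/3) ((2:ℝ)/3) then {k}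
  else if t ∈ Set.Ioo (-(1:ℝ)/3) ((1:ℝ)/3) then {k, -k}
  else if t ∈ Set.Ioc ((2:ℝ)/3) 1 then {k, -k - 1}
  else if t ∈ Set.Ioo (-1 : ℝ) (-(2:ℝ)/3) then {k, -k + 1}
  else ∅

/-- The spectrum of `L(Q)`: the set of Bloch eigenvalues of `L_t(Q)` for some `t ∈ (-1,1]`. -/
def SpecLQ {m : ℕ} (Q : ℝ → Matrix (Fin m) (Fin m) ℂ) : Set ℂ :=
  {lam | ∃ t ∈ Set.Ioc (-1:ℝ) 1, IsBlochEigenvalue Q t lam}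


/-!
Split a solution of `-Ψ'' + QΨ = ρ²Ψ` into travelling waves, `Ψ = X₊ + X₋` and
`Ψ' = iρ (X₊ - X₋)`, so that `X = (X₊, X₋)` solves a first-order linear system. By PT symmetry,
`X (-x) = conj (X x)` whenever `v = X 0` is real. The Bloch condition between `-π/2` and `π/2` then
reads `S v = e^{iπt} conj (S v)`, where `S` is the transfer matrix from `0` to `π/2`. It has a
nonzero real solution `v` exactly when the real determinant of `Im (e^{-iπt/2} S)` vanishes.

As `ρ → ∞`, interaction with `Q` becomes negligible and `S` approaches its free counterpart. With
`u = e^{iρπ/2}`, the determinant is then close to `(-(Im u)²)^m` at `t = 0` and to `(Re u)^{2m}` at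
`t = 1`. For odd `m` these have opposite signs, so some `t ∈ [0, 1]` makes the determinant vanish,
provided that `sin (πρ)` stays away from `0`. The `x` with `√x` near an integer occupy an
arbitrarily small proportion of `[0, n]`.
-/

/-! ### Linear differential equations in a Banach algebra -/

theorem exists_norm_le_of_abs_le {E : Type*} [SeminormedAddCommGroup E] {f : ℝ → E}
    (hf : Continuous f) (r : ℝ) : ∃ K, ∀ s, |s| ≤ r → ‖f s‖ ≤ K := by
  obtain ⟨K, hK⟩ := (isCompact_closedBall (0 : ℝ) r).exists_bound_of_continuousOn hf.continuousOn
  exact ⟨K, fun s hs => hK s (mem_closedBall_zero_iff.mpr hs)⟩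

section Propagator

variable {𝔸 : Type*} [NormedRing 𝔸] [NormedAlgebra ℝ 𝔸] {A : ℝ → 𝔸}

/-- The `n`-th term of the Dyson series (Picard iteration) of the linear equation `Y' = A Y`,
`Y 0 = 1`. -/
def dysonTerm (A : ℝ → 𝔸) : ℕ → ℝ → 𝔸
  | 0 => fun _ => 1
  | n + 1 => fun x => ∫ s in (0 : ℝ)..x, A s * dysonTerm A n s

/-- The solution of `Y' = A Y`, `Y 0 = 1` (the time-ordered exponential of `A`), as the sum of its
Dyson series. -/
def propagator (A : ℝ → 𝔸) (x : ℝ) : 𝔸 := ∑' n, dysonTerm A n x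

theorem dysonTerm_succ_at_zero (A : ℝ → 𝔸) (n : ℕ) : dysonTerm A (n + 1) 0 = 0 :=
  intervalIntegral.integral_same

theorem propagator_zero (A : ℝ → 𝔸) : propagator A 0 = 1 := by
  refine (tsum_eq_single 0 fun n hn => ?_).trans rfl
  obtain ⟨k, rfl⟩ := Nat.exists_eq_succ_of_ne_zero hn
  exact dysonTerm_succ_at_zero A k

theorem continuous_dysonTerm (hA : Continuous A) (n : ℕ) : Continuous (dysonTerm A n) := by
  induction n with
  | zero => exact continuous_const
  | succ n ih =>
    exact intervalIntegral.continuous_primitive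
      (fun a b => (hA.mul ih).intervalIntegrable a b) 0

theorem norm_dysonTerm_le (hA : Continuous A) {K : ℝ} (n : ℕ) {x : ℝ}
    (hK : ∀ s, |s| ≤ |x| → ‖A s‖ ≤ K) :
    ‖dysonTerm A n x‖ ≤ (K * |x|) ^ n / n.factorial * ‖(1 : 𝔸)‖ := by
  induction n generalizing x with
  | zero => simp [dysonTerm]
  | succ n ih =>
    have hcont := hA.mul (continuous_dysonTerm hA n)
    have hpoint : ∀ s ∈ uIoc 0 x, ‖A s * dysonTerm A n s‖ ≤
        K ^ (n + 1) / n.factorial * ‖(1 : 𝔸)‖ * |s - 0| ^ n := by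
      intro s hs
      have hsx : |s| ≤ |x| := by simpa using abs_sub_left_of_mem_uIcc (uIoc_subset_uIcc hs)
      calc ‖A s * dysonTerm A n s‖
          ≤ K * ((K * |s|) ^ n / n.factorial * ‖(1 : 𝔸)‖) :=
            norm_mul_le_of_le (hK s hsx) (ih fun r hr => hK r (hr.trans hsx))
        _ = K ^ (n + 1) / n.factorial * ‖(1 : 𝔸)‖ * |s - 0| ^ n := by rw [sub_zero]; ring
    calc ‖dysonTerm A (n + 1) x‖
        ≤ ∫ s in uIoc 0 x, ‖A s * dysonTerm A n s‖ :=
          intervalIntegral.norm_integral_le_integral_norm_uIoc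
      _ ≤ ∫ s in uIoc 0 x, K ^ (n + 1) / n.factorial * ‖(1 : 𝔸)‖ * |s - 0| ^ n :=
          setIntegral_mono_on (intervalIntegrable_iff.mp (hcont.norm.intervalIntegrable 0 x))
            (intervalIntegrable_iff.mp (Continuous.intervalIntegrable (by fun_prop) 0 x))
            measurableSet_uIoc hpoint
      _ = (K * |x|) ^ (n + 1) / (n + 1).factorial * ‖(1 : 𝔸)‖ := by
          rw [integral_const_mul, integral_pow_abs_sub_uIoc, sub_zero, Nat.factorial_succ, mul_pow]
          push_cast
          field_simp

theorem summable_pow_div_factorial_mul (a b : ℝ) :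
    Summable fun n : ℕ => a ^ n / n.factorial * b :=
  (Real.summable_pow_div_factorial a).mul_right b

variable [CompleteSpace 𝔸]

theorem summable_dysonTerm (hA : Continuous A) (x : ℝ) : Summable fun n => dysonTerm A n x := by
  obtain ⟨K, hK⟩ := exists_norm_le_of_abs_le hA |x|
  exact .of_norm_bounded (summable_pow_div_factorial_mul (K * |x|) ‖(1 : 𝔸)‖)
    fun n => norm_dysonTerm_le hA n hK

theorem norm_propagator_sub_one_le (hA : Continuous A) {K x : ℝ}
    (hK : ∀ s, |s| ≤ |x| → ‖A s‖ ≤ K) :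
    ‖propagator A x - 1‖ ≤ (Real.exp (K * |x|) - 1) * ‖(1 : 𝔸)‖ := by
  have htail : propagator A x - 1 = ∑' n, dysonTerm A (n + 1) x :=
    sub_eq_iff_eq_add'.mpr (summable_dysonTerm hA x).tsum_eq_zero_add
  have hexp : HasSum (fun n : ℕ => (K * |x|) ^ n / n.factorial) (Real.exp (K * |x|)) := by
    rw [Real.exp_eq_exp_ℝ]
    exact NormedSpace.expSeries_div_hasSum_exp (K * |x|)
  have hexp_tail : HasSum (fun n : ℕ => (K * |x|) ^ (n + 1) / (n + 1).factorial)
      (Real.exp (K * |x|) - 1) := by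
    simpa using (hasSum_nat_add_iff' 1).mpr hexp
  rw [htail]
  exact tsum_of_norm_bounded (hexp_tail.mul_right _) fun n => norm_dysonTerm_le hA (n + 1) hK

theorem hasDerivAt_dysonTerm_succ (hA : Continuous A) (n : ℕ) (x : ℝ) :
    HasDerivAt (dysonTerm A (n + 1)) (A x * dysonTerm A n x) x :=
  have hcont := hA.mul (continuous_dysonTerm hA n)
  intervalIntegral.integral_hasDerivAt_right (hcont.intervalIntegrable 0 x)
    (hcont.stronglyMeasurableAtFilter _ _) hcont.continuousAt

theorem isIntegralCurve_propagator (hA : Continuous A) :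
    IsIntegralCurve (propagator A) fun x Y => A x * Y := by
  intro x
  obtain ⟨K, hK⟩ := exists_norm_le_of_abs_le hA (|x| + 1)
  have hK0 : 0 ≤ K := (norm_nonneg _).trans (hK 0 (by rw [abs_zero]; positivity))
  let bound : ℕ → ℝ := fun n => K * ((K * (|x| + 1)) ^ n / n.factorial * ‖(1 : 𝔸)‖)
  have hbound : ∀ n, ∀ y ∈ ball (0 : ℝ) (|x| + 1), ‖A y * dysonTerm A n y‖ ≤ bound n := by
    intro n y hy
    have hy : |y| ≤ |x| + 1 := (mem_ball_zero_iff.mp hy).le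
    refine norm_mul_le_of_le (hK y hy)
      ((norm_dysonTerm_le hA n fun s hs => hK s (hs.trans hy)).trans ?_)
    gcongr
  have htail : HasDerivAt (fun y => ∑' n, dysonTerm A (n + 1) y)
      (∑' n, A x * dysonTerm A n x) x :=
    hasDerivAt_tsum_of_isPreconnected (y₀ := 0) ((summable_pow_div_factorial_mul _ _).mul_left K)
      isOpen_ball (convex_ball _ _).isPreconnected (fun n y _ => hasDerivAt_dysonTerm_succ hA n y)
      hbound (mem_ball_self (by positivity))
      (by simpa only [dysonTerm_succ_at_zero] using summable_zero) (by simp)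
  have hsplit : propagator A = fun y => 1 + ∑' n, dysonTerm A (n + 1) y :=
    funext fun y => (summable_dysonTerm hA y).tsum_eq_zero_add
  exact (hsplit ▸ htail.const_add 1).congr_deriv ((summable_dysonTerm hA x).tsum_mul_left _)

/-- The solution of `Y' = (D + R) Y`, `Y 0 = 1`, in the interaction picture of the free motion
`exp (x D)`, that is, with the factor `exp (x D)` removed. -/
def interactionPropagator (D : 𝔸) (R : ℝ → 𝔸) : ℝ → 𝔸 :=
  propagator fun s => NormedSpace.exp (-(s • D)) * R s * NormedSpace.exp (s • D)

theorem exp_mul_exp_neg_smul (D : 𝔸) (s : ℝ) :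
    NormedSpace.exp (s • D) * NormedSpace.exp (-(s • D)) = 1 := by
  let _ : NormedAlgebra ℚ 𝔸 := NormedAlgebra.restrictScalars ℚ ℝ 𝔸
  rw [← NormedSpace.exp_add_of_commute (Commute.neg_right (Commute.refl _)), add_neg_cancel,
    NormedSpace.exp_zero]

theorem continuous_exp_conj (D : 𝔸) {R : ℝ → 𝔸} (hR : Continuous R) :
    Continuous fun s : ℝ => NormedSpace.exp (-(s • D)) * R s * NormedSpace.exp (s • D) := by
  have hexp (D' : 𝔸) : Continuous fun s : ℝ => NormedSpace.exp (s • D') :=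
    (differentiable_exp_smul_const ℝ D').continuous
  simp only [← smul_neg]
  exact ((hexp (-D)).mul hR).mul (hexp D)

theorem isIntegralCurve_exp_mul_interactionPropagator (D : 𝔸) {R : ℝ → 𝔸} (hR : Continuous R) :
    IsIntegralCurve (fun x => NormedSpace.exp (x • D) * interactionPropagator D R x)
      fun x Y => (D + R x) * Y := by
  intro x
  refine ((hasDerivAt_exp_smul_const' D x).mul
    (isIntegralCurve_propagator (continuous_exp_conj D hR) x)).congr_deriv ?_
  set E := NormedSpace.exp (x • D)
  set Z := interactionPropagator D R x
  calc D * E * Z + E * (NormedSpace.exp (-(x • D)) * R x * E * Z)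
      = D * E * Z + E * NormedSpace.exp (-(x • D)) * (R x * E * Z) := by simp only [mul_assoc]
    _ = (D + R x) * (E * Z) := by
        rw [exp_mul_exp_neg_smul, one_mul, add_mul, mul_assoc, mul_assoc]

theorem norm_interactionPropagator_sub_one_le {D : 𝔸} {R : ℝ → 𝔸} (hR : Continuous R) {K x : ℝ}
    (hD : ∀ s : ℝ, ‖NormedSpace.exp (s • D)‖ ≤ 1) (hK : ∀ s, |s| ≤ |x| → ‖R s‖ ≤ K) :
    ‖interactionPropagator D R x - 1‖ ≤ (Real.exp (K * |x|) - 1) * ‖(1 : 𝔸)‖ := by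
  refine norm_propagator_sub_one_le (continuous_exp_conj D hR) fun s hs => ?_
  have hleft : ‖NormedSpace.exp (-(s • D))‖ ≤ 1 := by simpa only [neg_smul] using hD (-s)
  simpa only [one_mul, mul_one] using
    norm_mul_le_of_le (norm_mul_le_of_le hleft (hK s hs)) (hD s)

end Propagator

section Uniqueness

open scoped Matrix.Norms.Operator

variable {ι : Type*} [Fintype ι] {A : ℝ → Matrix ι ι ℂ}

theorem eq_of_isIntegralCurve_mulVec (hA : Continuous A) {f g : ℝ → ι → ℂ}
    (hf : IsIntegralCurve f fun x v => (A x).mulVec v)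
    (hg : IsIntegralCurve g fun x v => (A x).mulVec v) {x₀ : ℝ} (h₀ : f x₀ = g x₀) : f = g := by
  funext x
  obtain ⟨K, hK⟩ := exists_norm_le_of_abs_le hA (|x₀| + |x| + 1)
  have hK' : ∀ s ∈ Ioo (-(|x₀| + |x| + 1)) (|x₀| + |x| + 1),
      LipschitzOnWith K.toNNReal (fun v => (A s).mulVec v) univ := by
    intro s hs
    refine (LipschitzWith.of_dist_le_mul fun v w => ?_).lipschitzOnWith
    rw [dist_eq_norm, dist_eq_norm, ← Matrix.mulVec_sub]
    refine (Matrix.linfty_opNorm_mulVec _ _).trans (mul_le_mul_of_nonneg_right ?_ (norm_nonneg _))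
    exact (hK s (abs_lt.mpr hs).le).trans (Real.le_coe_toNNReal K)
  have hmem : ∀ y, |y| < |x₀| + |x| + 1 → y ∈ Ioo (-(|x₀| + |x| + 1)) (|x₀| + |x| + 1) :=
    fun y => abs_lt.mp
  exact ODE_solution_unique_of_mem_Ioo hK' (hmem x₀ (by linarith [abs_nonneg x]))
    (fun s _ => ⟨hf s, mem_univ _⟩) (fun s _ => ⟨hg s, mem_univ _⟩) h₀
    (hmem x (by linarith [abs_nonneg x₀]))

theorem isIntegralCurve_mulVec_right {Y : ℝ → Matrix ι ι ℂ}
    (hY : IsIntegralCurve Y fun x M => A x * M) (v : ι → ℂ) :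
    IsIntegralCurve (fun x => (Y x).mulVec v) fun x w => (A x).mulVec w := by
  intro x
  let L : Matrix ι ι ℂ →L[ℝ] (ι → ℂ) := ((Matrix.mulVecBilin ℝ ℝ).flip v).toContinuousLinearMap
  exact (L.hasFDerivAt.comp_hasDerivAt x (hY x)).congr_deriv (Matrix.mulVec_mulVec _ _ _).symm

end Uniqueness

/-! ### Bloch phases of a transfer matrix -/

theorem continuous_blochPhase : Continuous blochPhase := by
  unfold blochPhase
  fun_prop

theorem blochPhase_zero : blochPhase 0 = 1 := by simp [blochPhase]

theorem blochPhase_add (s t : ℝ) : blochPhase (s + t) = blochPhase s * blochPhase t := by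
  rw [blochPhase, blochPhase, blochPhase, ← Complex.exp_add]
  push_cast
  ring_nf

theorem star_blochPhase (t : ℝ) : star (blochPhase t) = blochPhase (-t) := by
  simp [blochPhase, ← Complex.exp_conj]

theorem blochPhase_neg_one_div_two : blochPhase (-(1 / 2)) = -Complex.I := by
  rw [blochPhase, ← Complex.exp_neg_pi_div_two_mul_I]
  push_cast
  ring_nf

section BlochDet

variable {ι : Type*} [Fintype ι] [DecidableEq ι]

/-- The determinant of `Im (e^{-iπt/2} S)`. It vanishes exactly when some nonzero real vector `v`
satisfies `S v = e^{iπt} conj (S v)`. -/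
def blochDet (S : Matrix ι ι ℂ) (t : ℝ) : ℝ :=
  ((blochPhase (-(t / 2)) • S).map Complex.im).det

theorem continuous_blochDet {X : Type*} [TopologicalSpace X] {S : X → Matrix ι ι ℂ} {t : X → ℝ}
    (hS : Continuous S) (ht : Continuous t) : Continuous fun x => blochDet (S x) (t x) :=
  (((continuous_blochPhase.comp (ht.div_const 2).neg).smul hS).matrix_map
    Complex.continuous_im).matrix_det

theorem exists_isSelfAdjoint_mulVec_of_det_map_im_eq_zero {S : Matrix ι ι ℂ}
    (hS : (S.map Complex.im).det = 0) :
    ∃ v : ι → ℂ, v ≠ 0 ∧ IsSelfAdjoint v ∧ IsSelfAdjoint (S.mulVec v) := by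
  obtain ⟨v, hv, hSv⟩ := Matrix.exists_mulVec_eq_zero_iff.mpr hS
  refine ⟨fun i => v i, fun h => hv (funext fun i => Complex.ofReal_eq_zero.mp (congrFun h i)),
    funext fun i => Complex.conj_ofReal (v i), funext fun i => Complex.conj_eq_iff_im.mpr ?_⟩
  simpa only [Matrix.mulVec, dotProduct, Matrix.map_apply, Complex.im_sum, Complex.im_mul_ofReal,
    Pi.zero_apply] using congrFun hSv i

theorem exists_mulVec_eq_blochPhase_smul_of_blochDet_eq_zero {S : Matrix ι ι ℂ} {t : ℝ}
    (hS : blochDet S t = 0) :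
    ∃ v : ι → ℂ, v ≠ 0 ∧ IsSelfAdjoint v ∧ S.mulVec v = blochPhase t • star (S.mulVec v) := by
  obtain ⟨v, hv, hv_real, hSv⟩ := exists_isSelfAdjoint_mulVec_of_det_map_im_eq_zero hS
  refine ⟨v, hv, hv_real, ?_⟩
  rw [Matrix.smul_mulVec] at hSv
  have hphase : blochPhase (t / 2) * blochPhase (-(t / 2)) = 1 := by
    rw [← blochPhase_add, add_neg_cancel, blochPhase_zero]
  calc S.mulVec v = blochPhase (t / 2) • blochPhase (-(t / 2)) • S.mulVec v := by
        rw [smul_smul, hphase, one_smul]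
    _ = blochPhase (t / 2) • star (blochPhase (-(t / 2)) • S.mulVec v) := by rw [hSv.star_eq]
    _ = blochPhase t • star (S.mulVec v) := by
        rw [star_smul, star_blochPhase, neg_neg, smul_smul, ← blochPhase_add, add_halves]

theorem exists_blochPhase_of_blochDet {S : Matrix ι ι ℂ} (h₀ : blochDet S 0 < 0)
    (h₁ : 0 < blochDet S 1) :
    ∃ t ∈ Icc (0 : ℝ) 1, ∃ v : ι → ℂ, v ≠ 0 ∧ IsSelfAdjoint v ∧
      S.mulVec v = blochPhase t • star (S.mulVec v) := by
  have hcont : Continuous (blochDet S) := continuous_blochDet continuous_const continuous_id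
  obtain ⟨t, ht, hSt⟩ := intermediate_value_Icc zero_le_one hcont.continuousOn ⟨h₀.le, h₁.le⟩
  exact ⟨t, ht, exists_mulVec_eq_blochPhase_smul_of_blochDet_eq_zero hSt⟩

/-- The vector with every `inl`-entry `u` and every `inr`-entry `conj u`. -/
def conjPair (ι : Type*) (u : ℂ) : ι ⊕ ι → ℂ := Sum.elim (fun _ => u) fun _ => star u

theorem continuous_conjPair (ι : Type*) : Continuous (conjPair ι) := by
  refine continuous_pi fun i => ?_
  cases i
  · exact continuous_id
  · exact Complex.continuous_conj

theorem blochDet_diagonal_conjPair (u : ℂ) (t : ℝ) :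
    blochDet (Matrix.diagonal (conjPair ι u)) t =
      ((blochPhase (-(t / 2)) * u).im * (blochPhase (-(t / 2)) * star u).im) ^ Fintype.card ι := by
  rw [blochDet, ← Matrix.diagonal_smul, Matrix.diagonal_map Complex.zero_im, Matrix.det_diagonal,
    Fintype.prod_sum_type, mul_pow]
  simp [conjPair]

theorem blochDet_diagonal_conjPair_zero_neg (hι : Odd (Fintype.card ι)) {u : ℂ} (hu : u.im ≠ 0) :
    blochDet (Matrix.diagonal (conjPair ι u)) 0 < 0 := by
  rw [blochDet_diagonal_conjPair, zero_div, neg_zero, blochPhase_zero, one_mul, one_mul,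
    Complex.star_def, Complex.conj_im]
  refine hι.pow_neg ?_
  nlinarith [sq_pos_of_ne_zero hu]

theorem blochDet_diagonal_conjPair_one_pos {u : ℂ} (hu : u.re ≠ 0) :
    0 < blochDet (Matrix.diagonal (conjPair ι u)) 1 := by
  rw [blochDet_diagonal_conjPair, blochPhase_neg_one_div_two]
  simpa [mul_self_pos] using pow_pos (mul_self_pos.mpr hu) _

theorem eventually_blochDet_diagonal_conjPair_mul (hι : Odd (Fintype.card ι)) {δ : ℝ}
    (hδ : 0 < δ) :
    ∀ᶠ P in 𝓝 (1 : Matrix (ι ⊕ ι) (ι ⊕ ι) ℂ), ∀ u : ℂ, ‖u‖ = 1 → δ ≤ |u.re * u.im| →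
      blochDet (Matrix.diagonal (conjPair ι u) * P) 0 < 0 ∧
        0 < blochDet (Matrix.diagonal (conjPair ι u) * P) 1 := by
  have hcompact : IsCompact {u : ℂ | ‖u‖ = 1 ∧ δ ≤ |u.re * u.im|} := by
    refine (isCompact_sphere (0 : ℂ) 1).of_isClosed_subset ?_ fun u hu =>
      mem_sphere_zero_iff_norm.mpr hu.1
    exact (isClosed_eq continuous_norm continuous_const).inter
      (isClosed_le continuous_const (Complex.continuous_re.mul Complex.continuous_im).abs)
  suffices ∀ᶠ P in 𝓝 (1 : Matrix (ι ⊕ ι) (ι ⊕ ι) ℂ), ∀ u ∈ {u : ℂ | ‖u‖ = 1 ∧ δ ≤ |u.re * u.im|},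
      blochDet (Matrix.diagonal (conjPair ι u) * P) 0 < 0 ∧
        0 < blochDet (Matrix.diagonal (conjPair ι u) * P) 1 from
    this.mono fun P hP u hu hδu => hP u ⟨hu, hδu⟩
  refine hcompact.eventually_forall_of_forall_eventually fun u hu => ?_
  have hmul : Continuous fun z : Matrix (ι ⊕ ι) (ι ⊕ ι) ℂ × ℂ =>
      Matrix.diagonal (conjPair ι z.2) * z.1 :=
    ((continuous_conjPair ι).comp continuous_snd).matrix_diagonal.matrix_mul continuous_fst
  have hcont (t : ℝ) : Continuous fun z : Matrix (ι ⊕ ι) (ι ⊕ ι) ℂ × ℂ =>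
      blochDet (Matrix.diagonal (conjPair ι z.2) * z.1) t :=
    continuous_blochDet hmul continuous_const
  have hu_ne : u.re * u.im ≠ 0 := abs_pos.mp (hδ.trans_le hu.2)
  refine ((hcont 0).tendsto _ |>.eventually_lt_const ?_).and
    ((hcont 1).tendsto _ |>.eventually_const_lt ?_)
  · rw [mul_one]
    exact blochDet_diagonal_conjPair_zero_neg hι (right_ne_zero_of_mul hu_ne)
  · rw [mul_one]
    exact blochDet_diagonal_conjPair_one_pos (left_ne_zero_of_mul hu_ne)

end BlochDet

/-! ### Splitting into travelling waves -/

section WaveSplitting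

variable {ι : Type*}

/-- The value `Ψ = X₊ + X₋` of the wave with travelling-wave amplitudes `X = (X₊, X₋)`. -/
def waveValue (ι : Type*) : (ι ⊕ ι → ℂ) →L[ℂ] ι → ℂ :=
  .pi fun k => .proj (.inl k) + .proj (.inr k)

/-- The derivative `Ψ' = iρ (X₊ - X₋)` of the wave with travelling-wave amplitudes
`X = (X₊, X₋)`. -/
def waveSlope (ι : Type*) (ρ : ℝ) : (ι ⊕ ι → ℂ) →L[ℂ] ι → ℂ :=
  .pi fun k => (Complex.I * ρ) • (.proj (.inl k) - .proj (.inr k))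

theorem waveValue_apply (X : ι ⊕ ι → ℂ) (k : ι) :
    waveValue ι X k = X (.inl k) + X (.inr k) := rfl

theorem waveSlope_apply (ρ : ℝ) (X : ι ⊕ ι → ℂ) (k : ι) :
    waveSlope ι ρ X k = Complex.I * ρ * (X (.inl k) - X (.inr k)) := rfl

theorem eq_zero_of_waveValue_eq_zero_of_waveSlope_eq_zero {ρ : ℝ} (hρ : ρ ≠ 0) {X : ι ⊕ ι → ℂ}
    (hvalue : waveValue ι X = 0) (hslope : waveSlope ι ρ X = 0) : X = 0 := by
  have hadd (k : ι) : X (.inl k) + X (.inr k) = 0 := congrFun hvalue k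
  have hsub (k : ι) : X (.inl k) - X (.inr k) = 0 :=
    (mul_eq_zero.mp (congrFun hslope k)).resolve_left
      (mul_ne_zero Complex.I_ne_zero (Complex.ofReal_ne_zero.mpr hρ))
  ext (k | k) <;> simp only [Pi.zero_apply]
  · linear_combination (hadd k + hsub k) / 2
  · linear_combination (hadd k - hsub k) / 2

/-- The coupling of the two travelling waves `e^{iρx}` and `e^{-iρx}` by the potential `Q`. -/
def waveCoupling (Q : ℝ → Matrix ι ι ℂ) (ρ x : ℝ) : Matrix (ι ⊕ ι) (ι ⊕ ι) ℂ :=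
  (2 * (Complex.I * ρ))⁻¹ • Matrix.fromBlocks (Q x) (Q x) (-Q x) (-Q x)

theorem continuous_waveCoupling {Q : ℝ → Matrix ι ι ℂ} (hQ : Continuous Q) (ρ : ℝ) :
    Continuous (waveCoupling Q ρ) :=
  (Continuous.matrix_fromBlocks hQ hQ hQ.neg hQ.neg).const_smul (2 * (Complex.I * ρ))⁻¹

theorem map_star_waveCoupling_neg {Q : ℝ → Matrix ι ι ℂ}
    (hQ : ∀ x, (Q (-x)).map star = Q x) (ρ x : ℝ) :
    (waveCoupling Q ρ (-x)).map star = -waveCoupling Q ρ x := by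
  have hcoeff : star (2 * (Complex.I * ρ))⁻¹ = -(2 * (Complex.I * ρ))⁻¹ := by simp [star_inv₀]
  have hneg : (-Q (-x)).map star = -Q x := by rw [Matrix.map_neg _ star_neg, hQ]
  rw [waveCoupling, Matrix.map_smul' _ _ _ star_mul', Matrix.fromBlocks_map, hQ, hneg, hcoeff,
    neg_smul, waveCoupling]

theorem waveCoupling_mulVec [Fintype ι] (Q : ℝ → Matrix ι ι ℂ) (ρ x : ℝ) (X : ι ⊕ ι → ℂ) :
    (waveCoupling Q ρ x).mulVec X = (2 * (Complex.I * ρ))⁻¹ •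
      Sum.elim ((Q x).mulVec (waveValue ι X)) (-(Q x).mulVec (waveValue ι X)) := by
  have hvalue : waveValue ι X = X ∘ Sum.inl + X ∘ Sum.inr := rfl
  rw [waveCoupling, Matrix.smul_mulVec, Matrix.fromBlocks_mulVec, ← Matrix.mulVec_add,
    ← Matrix.mulVec_add, Matrix.neg_mulVec, hvalue]

variable [DecidableEq ι] {Q : ℝ → Matrix ι ι ℂ}

/-- The generator of the free motion, with `Q = 0`, of the amplitudes of the two travelling waves
`e^{iρx}` and `e^{-iρx}`. -/
def freeGenerator (ι : Type*) [DecidableEq ι] (ρ : ℝ) : Matrix (ι ⊕ ι) (ι ⊕ ι) ℂ :=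
  Matrix.diagonal (conjPair ι (Complex.I * ρ))

/-- The coefficient matrix of the first-order system satisfied by the amplitudes `(X₊, X₋)` when
a solution of `-Ψ'' + Q Ψ = ρ² Ψ` is split as `Ψ = X₊ + X₋`, `Ψ' = iρ (X₊ - X₋)`. -/
def waveGenerator (Q : ℝ → Matrix ι ι ℂ) (ρ x : ℝ) : Matrix (ι ⊕ ι) (ι ⊕ ι) ℂ :=
  freeGenerator ι ρ + waveCoupling Q ρ x

theorem continuous_waveGenerator (hQ : Continuous Q) (ρ : ℝ) : Continuous (waveGenerator Q ρ) :=
  (continuous_waveCoupling hQ ρ).const_add _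

theorem map_star_freeGenerator (ρ : ℝ) : (freeGenerator ι ρ).map star = -freeGenerator ι ρ := by
  rw [freeGenerator, Matrix.diagonal_map (star_zero ℂ), Matrix.diagonal_neg]
  congr 1
  ext (_ | _) <;> simp [conjPair]

theorem map_star_waveGenerator_neg (hQ : ∀ x, (Q (-x)).map star = Q x) (ρ x : ℝ) :
    (waveGenerator Q ρ (-x)).map star = -waveGenerator Q ρ x := by
  rw [waveGenerator, Matrix.map_add _ star_add, map_star_freeGenerator,
    map_star_waveCoupling_neg hQ, ← neg_add, waveGenerator]

variable [Fintype ι]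

theorem freeGenerator_mulVec (ρ : ℝ) (X : ι ⊕ ι → ℂ) :
    (freeGenerator ι ρ).mulVec X =
      (Complex.I * ρ) • Sum.elim (X ∘ Sum.inl) (-(X ∘ Sum.inr)) := by
  ext (_ | _) <;> simp [freeGenerator, conjPair, Matrix.mulVec_diagonal]

theorem waveValue_waveGenerator_mulVec (Q : ℝ → Matrix ι ι ℂ) (ρ x : ℝ) (X : ι ⊕ ι → ℂ) :
    waveValue ι ((waveGenerator Q ρ x).mulVec X) = waveSlope ι ρ X := by
  rw [waveGenerator, Matrix.add_mulVec, freeGenerator_mulVec, waveCoupling_mulVec]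
  ext k
  simp only [waveValue_apply, waveSlope_apply, Pi.add_apply, Pi.smul_apply, Pi.neg_apply,
    Sum.elim_inl, Sum.elim_inr, Function.comp_apply, smul_eq_mul]
  ring

theorem waveSlope_waveGenerator_mulVec (Q : ℝ → Matrix ι ι ℂ) {ρ : ℝ} (hρ : ρ ≠ 0) (x : ℝ)
    (X : ι ⊕ ι → ℂ) :
    waveSlope ι ρ ((waveGenerator Q ρ x).mulVec X) =
      (Q x).mulVec (waveValue ι X) - ((ρ ^ 2 : ℝ) : ℂ) • waveValue ι X := by
  have hρ' : (ρ : ℂ) ≠ 0 := Complex.ofReal_ne_zero.mpr hρ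
  rw [waveGenerator, Matrix.add_mulVec, freeGenerator_mulVec, waveCoupling_mulVec]
  generalize (Q x).mulVec (waveValue ι X) = W
  ext k
  simp only [waveValue_apply, waveSlope_apply, Pi.add_apply, Pi.sub_apply, Pi.smul_apply,
    Pi.neg_apply, Sum.elim_inl, Sum.elim_inr, Function.comp_apply, smul_eq_mul]
  push_cast
  field_simp
  linear_combination 2 * ρ ^ 2 * (X (.inl k) + X (.inr k)) * Complex.I_sq

theorem exp_smul_freeGenerator (ρ x : ℝ) :
    NormedSpace.exp (x • freeGenerator ι ρ) =
      Matrix.diagonal (conjPair ι (Complex.exp ((ρ * x : ℝ) * Complex.I))) := by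
  have hsmul : x • conjPair ι (Complex.I * ρ) = conjPair ι ((ρ * x : ℝ) * Complex.I) := by
    ext (_ | _) <;> simp [conjPair] <;> ring
  have hexp (z : ℂ) : NormedSpace.exp (conjPair ι z) = conjPair ι (Complex.exp z) := by
    ext (_ | _) <;> simp [Pi.coe_exp, conjPair, ← Complex.exp_eq_exp_ℂ, ← Complex.exp_conj]
  rw [freeGenerator, ← Matrix.diagonal_smul, Matrix.exp_diagonal, hsmul, hexp]

open scoped Matrix.Norms.Operator

theorem norm_diagonal_conjPair_le (u : ℂ) : ‖Matrix.diagonal (conjPair ι u)‖ ≤ ‖u‖ := by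
  rw [Matrix.linfty_opNorm_diagonal, pi_norm_le_iff_of_nonneg (norm_nonneg _)]
  rintro (_ | _)
  · exact le_rfl
  · exact (norm_star u).le

theorem norm_exp_smul_freeGenerator_le (ρ x : ℝ) :
    ‖NormedSpace.exp (x • freeGenerator ι ρ)‖ ≤ 1 :=
  (congrArg norm (exp_smul_freeGenerator ρ x)).trans_le <|
    (norm_diagonal_conjPair_le _).trans_eq (Complex.norm_exp_ofReal_mul_I _)

theorem tendsto_interactionPropagator_waveCoupling (hQ : Continuous Q) (x : ℝ) :
    Tendsto (fun ρ => interactionPropagator (freeGenerator ι ρ) (waveCoupling Q ρ) x) atTop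
      (𝓝 1) := by
  obtain ⟨K, hK⟩ := exists_norm_le_of_abs_le
    (Continuous.matrix_fromBlocks hQ hQ hQ.neg hQ.neg) |x|
  have hbound : ∀ ρ, 0 < ρ → ‖interactionPropagator (freeGenerator ι ρ) (waveCoupling Q ρ) x - 1‖ ≤
      (Real.exp ((2 * ρ)⁻¹ * K * |x|) - 1) * ‖(1 : Matrix (ι ⊕ ι) (ι ⊕ ι) ℂ)‖ := by
    intro ρ hρ
    refine norm_interactionPropagator_sub_one_le (continuous_waveCoupling hQ ρ)
      (norm_exp_smul_freeGenerator_le ρ) fun s hs => ?_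
    have hcoeff : ‖(2 * (Complex.I * ρ))⁻¹‖ = (2 * ρ)⁻¹ := by simp [abs_of_pos hρ]
    exact (norm_smul_le _ _).trans (mul_le_mul hcoeff.le (hK s hs) (norm_nonneg _) (by positivity))
  have hzero : Tendsto (fun ρ : ℝ => (Real.exp ((2 * ρ)⁻¹ * K * |x|) - 1) *
      ‖(1 : Matrix (ι ⊕ ι) (ι ⊕ ι) ℂ)‖) atTop (𝓝 0) := by
    have hinv : Tendsto (fun ρ : ℝ => (2 * ρ)⁻¹) atTop (𝓝 0) :=
      tendsto_inv_atTop_zero.comp (tendsto_id.const_mul_atTop two_pos)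
    have hexp := (Real.continuous_exp.tendsto _).comp ((hinv.mul_const K).mul_const |x|)
    simpa using (hexp.sub_const 1).mul_const ‖(1 : Matrix (ι ⊕ ι) (ι ⊕ ι) ℂ)‖
  exact tendsto_iff_norm_sub_tendsto_zero.mpr <| squeeze_zero' (.of_forall fun _ => norm_nonneg _)
    ((eventually_gt_atTop 0).mono hbound) hzero

end WaveSplitting

/-! ### Bloch solutions -/

section BlochSolution

variable {ι : Type*} [Fintype ι] {A : ℝ → Matrix ι ι ℂ} {X : ℝ → ι → ℂ}

theorem apply_neg_eq_star_of_isIntegralCurve (hA : Continuous A)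
    (hA_symm : ∀ x, (A (-x)).map star = -A x)
    (hX : IsIntegralCurve X fun x v => (A x).mulVec v) (hX₀ : IsSelfAdjoint (X 0)) (x : ℝ) :
    X (-x) = star (X x) := by
  have hA_mulVec (y : ℝ) (v : ι → ℂ) : star ((A (-y)).mulVec v) = -(A y).mulVec (star v) := by
    rw [← Matrix.neg_mulVec, ← hA_symm]
    exact funext fun i => RingHom.map_mulVec (starRingEnd ℂ) _ _ i
  have hreflect : IsIntegralCurve (fun y => star (X (-y))) fun y v => (A y).mulVec v := by
    intro y
    have hcomp : HasDerivAt (fun y => X (-y)) (-(A (-y)).mulVec (X (-y))) y := by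
      simpa using! (hX (-y)).scomp y (hasDerivAt_neg y)
    exact hcomp.star.congr_deriv (by rw [star_neg, hA_mulVec, neg_neg])
  have heq := eq_of_isIntegralCurve_mulVec hA hX hreflect
    (x₀ := 0) (by rw [neg_zero, hX₀.star_eq])
  rw [congrFun heq (-x), neg_neg]

theorem add_period_eq_smul_of_isIntegralCurve (hA : Continuous A) {T : ℝ}
    (hA_per : Function.Periodic A T) (hX : IsIntegralCurve X fun x v => (A x).mulVec v)
    {z : ℂ} {x₀ : ℝ} (hX₀ : X (x₀ + T) = z • X x₀) (x : ℝ) : X (x + T) = z • X x := by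
  have hshift : IsIntegralCurve (fun y => X (y + T)) fun y v => (A y).mulVec v := fun y => by
    simpa only [hA_per y] using (hX (y + T)).comp_add_const y T
  have hsmul : IsIntegralCurve (fun y => z • X y) fun y v => (A y).mulVec v := fun y =>
    ((hX y).const_smul z).congr_deriv (Matrix.mulVec_smul _ _ _).symm
  exact congrFun (eq_of_isIntegralCurve_mulVec hA hshift hsmul hX₀) x

open scoped Matrix.Norms.Operator in
theorem exists_bloch_solution_of_blochDet [DecidableEq ι] (hA : Continuous A)
    (hA_symm : ∀ x, (A (-x)).map star = -A x) {T : ℝ} (hA_per : Function.Periodic A T)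
    {Y : ℝ → Matrix ι ι ℂ} (hY : IsIntegralCurve Y fun x M => A x * M) (hY₀ : Y 0 = 1)
    (h₀ : blochDet (Y (T / 2)) 0 < 0) (h₁ : 0 < blochDet (Y (T / 2)) 1) :
    ∃ t ∈ Icc (0 : ℝ) 1, ∃ X : ℝ → ι → ℂ, X ≠ 0 ∧
      IsIntegralCurve X (fun x v => (A x).mulVec v) ∧ ∀ x, X (x + T) = blochPhase t • X x := by
  obtain ⟨t, ht, v, hv, hv_real, hYv⟩ := exists_blochPhase_of_blochDet h₀ h₁
  let X : ℝ → ι → ℂ := fun x => (Y x).mulVec v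
  have hX : IsIntegralCurve X fun x v => (A x).mulVec v := isIntegralCurve_mulVec_right hY v
  have hX₀ : X 0 = v := by simp only [X, hY₀, Matrix.one_mulVec]
  have hX_symm := apply_neg_eq_star_of_isIntegralCurve hA hA_symm hX (hX₀ ▸ hv_real)
  have hboundary : X (-(T / 2) + T) = blochPhase t • X (-(T / 2)) := by
    rw [hX_symm, neg_add_eq_sub, sub_half]
    exact hYv
  exact ⟨t, ht, X, fun h => hv (hX₀ ▸ congrFun h 0), hX,
    add_period_eq_smul_of_isIntegralCurve hA hA_per hX hboundary⟩

theorem hasDerivAt_waveValue [DecidableEq ι] {Q : ℝ → Matrix ι ι ℂ} {ρ : ℝ} {X : ℝ → ι ⊕ ι → ℂ}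
    (hX : IsIntegralCurve X fun x v => (waveGenerator Q ρ x).mulVec v) (x : ℝ) :
    HasDerivAt (fun x => waveValue ι (X x)) (waveSlope ι ρ (X x)) x := by
  rw [← waveValue_waveGenerator_mulVec Q]
  exact ((waveValue ι).restrictScalars ℝ).hasFDerivAt.comp_hasDerivAt x (hX x)

theorem hasDerivAt_waveSlope [DecidableEq ι] {Q : ℝ → Matrix ι ι ℂ} {ρ : ℝ} (hρ : ρ ≠ 0)
    {X : ℝ → ι ⊕ ι → ℂ} (hX : IsIntegralCurve X fun x v => (waveGenerator Q ρ x).mulVec v)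
    (x : ℝ) :
    HasDerivAt (fun x => waveSlope ι ρ (X x))
      ((Q x).mulVec (waveValue ι (X x)) - ((ρ ^ 2 : ℝ) : ℂ) • waveValue ι (X x)) x := by
  rw [← waveSlope_waveGenerator_mulVec Q hρ]
  exact ((waveSlope ι ρ).restrictScalars ℝ).hasFDerivAt.comp_hasDerivAt x (hX x)

theorem isBlochPair_waveValue {m : ℕ} {Q : ℝ → Matrix (Fin m) (Fin m) ℂ} (hQ : Continuous Q)
    {ρ : ℝ} (hρ : ρ ≠ 0) {X : ℝ → Fin m ⊕ Fin m → ℂ} (hX_ne : X ≠ 0)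
    (hX : IsIntegralCurve X fun x v => (waveGenerator Q ρ x).mulVec v) {t : ℝ}
    (hX_per : ∀ x, X (x + Real.pi) = blochPhase t • X x) :
    IsBlochPair Q t ((ρ ^ 2 : ℝ) : ℂ) fun x => waveValue (Fin m) (X x) := by
  have hvalue := hasDerivAt_waveValue hX
  have hslope := hasDerivAt_waveSlope hρ hX
  have hderiv := funext fun x => (hvalue x).deriv
  have hderiv₂ := funext fun x => (hslope x).deriv
  have hvalue_cont : Continuous fun x => waveValue (Fin m) (X x) :=
    (waveValue (Fin m)).continuous.comp hX.continuous
  refine ⟨fun h => hX_ne (funext fun x => ?_), ?_, fun x => ?_, fun x => ?_⟩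
  · refine eq_zero_of_waveValue_eq_zero_of_waveSlope_eq_zero hρ (congrFun h x) ?_
    rw [← (hvalue x).deriv, h]
    exact deriv_const x 0
  · rw [← one_add_one_eq_two, contDiff_succ_iff_deriv, hderiv, contDiff_one_iff_deriv, hderiv₂]
    exact ⟨fun x => (hvalue x).differentiableAt, by simp, fun x => (hslope x).differentiableAt,
      (hQ.matrix_mulVec hvalue_cont).sub (hvalue_cont.const_smul ((ρ ^ 2 : ℝ) : ℂ))⟩
  · rw [hderiv, (hslope x).deriv, neg_sub, sub_add_cancel]
  · exact (congrArg _ (hX_per x)).trans (map_smul _ _ _)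

open scoped Matrix.Norms.Operator in
theorem eventually_sq_mem_specLQ {m : ℕ} (hm : Odd m) {Q : ℝ → Matrix (Fin m) (Fin m) ℂ}
    (hQ : Continuous Q) (hQ_per : Function.Periodic Q Real.pi)
    (hQ_symm : ∀ x, (Q (-x)).map star = Q x) {δ : ℝ} (hδ : 0 < δ) :
    ∀ᶠ ρ in atTop, δ ≤ |Real.sin (Real.pi * ρ)| → ((ρ ^ 2 : ℝ) : ℂ) ∈ SpecLQ Q := by
  have hsigns := (tendsto_interactionPropagator_waveCoupling hQ (Real.pi / 2)).eventually
    (eventually_blochDet_diagonal_conjPair_mul (by rwa [Fintype.card_fin]) (half_pos hδ))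
  filter_upwards [hsigns, eventually_ne_atTop 0] with ρ hρ_signs hρ hδρ
  set u := Complex.exp ((ρ * (Real.pi / 2) : ℝ) * Complex.I)
  have hu : δ / 2 ≤ |u.re * u.im| := by
    have hdouble : Real.sin (Real.pi * ρ) = 2 * (u.re * u.im) := by
      rw [Complex.exp_ofReal_mul_I_re, Complex.exp_ofReal_mul_I_im,
        show Real.pi * ρ = 2 * (ρ * (Real.pi / 2)) by ring, Real.sin_two_mul]
      ring
    rw [hdouble, abs_mul, abs_two] at hδρ
    linarith
  have hsigns_u := hρ_signs u (Complex.norm_exp_ofReal_mul_I _) hu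
  rw [← exp_smul_freeGenerator] at hsigns_u
  have hgen_per : Function.Periodic (waveGenerator Q ρ) Real.pi := fun x => by
    rw [waveGenerator, waveCoupling, hQ_per, waveGenerator, waveCoupling]
  obtain ⟨t, ht, X, hX_ne, hX, hX_per⟩ := exists_bloch_solution_of_blochDet
    (continuous_waveGenerator hQ ρ) (map_star_waveGenerator_neg hQ_symm ρ) hgen_per
    (isIntegralCurve_exp_mul_interactionPropagator _ (continuous_waveCoupling hQ ρ))
    (by simp [interactionPropagator, propagator_zero]) hsigns_u.1 hsigns_u.2
  exact ⟨t, ⟨by linarith [ht.1], ht.2⟩, _, isBlochPair_waveValue hQ hρ hX_ne hX hX_per⟩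

end BlochSolution

/-! ### The measure of the exceptional set -/

section Measure

theorem two_mul_abs_sub_round_le_abs_sin (ρ : ℝ) :
    2 * |ρ - round ρ| ≤ |Real.sin (Real.pi * ρ)| := by
  have hle : |Real.pi * (ρ - round ρ)| ≤ Real.pi / 2 := by
    rw [abs_mul, abs_of_pos Real.pi_pos]
    nlinarith [abs_sub_round ρ, Real.pi_pos]
  have hshift : Real.pi * (ρ - round ρ) = Real.pi * ρ - round ρ * Real.pi := by ring
  calc 2 * |ρ - round ρ| = 2 / Real.pi * |Real.pi * (ρ - round ρ)| := by
        rw [abs_mul, abs_of_pos Real.pi_pos]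
        field_simp
    _ ≤ |Real.sin (Real.pi * (ρ - round ρ))| := Real.mul_abs_le_abs_sin hle
    _ = |Real.sin (Real.pi * ρ)| := by
        rw [hshift, Real.sin_sub_int_mul_pi, abs_mul, abs_zpow, abs_neg, abs_one, one_zpow, one_mul]

theorem mem_Icc_sq_of_abs_sub_natCast_lt {s η : ℝ} {k : ℕ} (h : |s - k| < η) :
    s ^ 2 ∈ Icc ((k : ℝ) ^ 2 - 2 * k * η) ((k : ℝ) ^ 2 + 2 * k * η + η ^ 2) := by
  obtain ⟨hlower, hupper⟩ := abs_lt.mp h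
  have hexpand : s ^ 2 = (k : ℝ) ^ 2 + 2 * k * (s - k) + (s - k) ^ 2 := by ring
  have hk : (0 : ℝ) ≤ 2 * k := by positivity
  constructor
  · linarith [hexpand, mul_le_mul_of_nonneg_left hlower.le hk, sq_nonneg (s - k)]
  · linarith [hexpand, mul_le_mul_of_nonneg_left hupper.le hk,
      sq_le_sq' hlower.le hupper.le]

theorem setOf_sqrt_near_integer_subset (η T : ℝ) :
    {x | x ∈ Icc 0 T ∧ |√x - round √x| < η} ⊆
      ⋃ k ∈ Finset.range (⌊√T⌋₊ + 2),
        Icc ((k : ℝ) ^ 2 - 2 * k * η) ((k : ℝ) ^ 2 + 2 * k * η + η ^ 2) := by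
  rintro x ⟨⟨hx₀, hxT⟩, hx⟩
  have hround : 0 ≤ round √x := by
    rw [round_eq]
    positivity
  obtain ⟨k, hk⟩ := Int.eq_ofNat_of_zero_le hround
  have hdist := abs_sub_round √x
  rw [hk, Int.cast_natCast] at hx hdist
  have hk_lt : (k : ℝ) < (⌊√T⌋₊ + 2 : ℕ) := by
    push_cast
    linarith [(abs_le.mp hdist).1, Real.sqrt_le_sqrt hxT, Nat.lt_floor_add_one √T]
  refine mem_biUnion (Finset.mem_coe.mpr (Finset.mem_range.mpr (Nat.cast_lt.mp hk_lt))) ?_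
  simpa only [Real.sq_sqrt hx₀] using mem_Icc_sq_of_abs_sub_natCast_lt hx

theorem measureReal_sqrt_near_integer_le {η T : ℝ} (hη : 0 ≤ η) (hη₁ : η ≤ 1) (hT : 1 ≤ T) :
    volume.real {x | x ∈ Icc 0 T ∧ |√x - round √x| < η} ≤ 36 * η * T := by
  set N := ⌊√T⌋₊ + 2
  have hN : (N : ℝ) ≤ 3 * √T := by
    push_cast [N]
    linarith [Nat.floor_le (Real.sqrt_nonneg T), Real.one_le_sqrt.mpr hT]
  have hlength : ∀ k ∈ Finset.range N,
      volume.real (Icc ((k : ℝ) ^ 2 - 2 * k * η) ((k : ℝ) ^ 2 + 2 * k * η + η ^ 2)) ≤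
        4 * N * η := by
    intro k hk
    have hkN : (k : ℝ) + 1 ≤ N := by exact_mod_cast Finset.mem_range.mp hk
    rw [Real.volume_real_Icc_of_le (by nlinarith [k.cast_nonneg (α := ℝ)])]
    nlinarith
  calc volume.real {x | x ∈ Icc 0 T ∧ |√x - round √x| < η}
      ≤ volume.real (⋃ k ∈ Finset.range N,
          Icc ((k : ℝ) ^ 2 - 2 * k * η) ((k : ℝ) ^ 2 + 2 * k * η + η ^ 2)) :=
        measureReal_mono (setOf_sqrt_near_integer_subset η T)
          ((measure_biUnion_lt_top (Finset.finite_toSet _) fun _ _ => measure_Icc_lt_top).ne)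
    _ ≤ ∑ k ∈ Finset.range N,
          volume.real (Icc ((k : ℝ) ^ 2 - 2 * k * η) ((k : ℝ) ^ 2 + 2 * k * η + η ^ 2)) :=
        measureReal_biUnion_finset_le _ _
    _ ≤ N * (4 * N * η) := by
        simpa only [Finset.card_range, nsmul_eq_mul] using Finset.sum_le_card_nsmul _ _ _ hlength
    _ = 4 * η * (N : ℝ) ^ 2 := by ring
    _ ≤ 4 * η * (3 * √T) ^ 2 := by gcongr
    _ = 36 * η * T := by rw [mul_pow, Real.sq_sqrt (by linarith)]; ring

theorem measureReal_Icc_diff_le {S : Set ℝ} {R η T : ℝ} (hη : 0 ≤ η) (hη₁ : η ≤ 1)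
    (hT : 1 ≤ T)
    (hS : ∀ ρ, R ≤ ρ → 2 * η ≤ |Real.sin (Real.pi * ρ)| → ρ ^ 2 ∈ S) :
    volume.real (Icc 0 T \ S) ≤ R ^ 2 + 36 * η * T := by
  have hcover : Icc 0 T \ S ⊆ Icc 0 (R ^ 2) ∪ {x | x ∈ Icc 0 T ∧ |√x - round √x| < η} := by
    rintro x ⟨hxT, hxS⟩
    refine (le_total x (R ^ 2)).imp (fun hxR => ⟨hxT.1, hxR⟩) fun hRx => ⟨hxT, ?_⟩
    by_contra! hfar
    have hsin := (mul_le_mul_of_nonneg_left hfar zero_le_two).trans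
      (two_mul_abs_sub_round_le_abs_sin √x)
    exact hxS (Real.sq_sqrt hxT.1 ▸ hS √x (Real.le_sqrt_of_sq_le hRx) hsin)
  have hfinite : volume (Icc 0 (R ^ 2) ∪ {x | x ∈ Icc 0 T ∧ |√x - round √x| < η}) ≠ ⊤ :=
    measure_union_ne_top measure_Icc_lt_top.ne
      (measure_ne_top_of_subset (fun _ hx => hx.1) measure_Icc_lt_top.ne)
  calc volume.real (Icc 0 T \ S)
      ≤ volume.real (Icc 0 (R ^ 2)) + volume.real {x | x ∈ Icc 0 T ∧ |√x - round √x| < η} :=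
        (measureReal_mono hcover hfinite).trans (measureReal_union_le _ _)
    _ ≤ R ^ 2 + 36 * η * T := by
        rw [Real.volume_real_Icc_of_le (sq_nonneg R), sub_zero]
        gcongr
        exact measureReal_sqrt_near_integer_le hη hη₁ hT

theorem tendsto_measureReal_Icc_diff_div {S : Set ℝ}
    (hS : ∀ δ > 0, ∀ᶠ ρ : ℝ in atTop, δ ≤ |Real.sin (Real.pi * ρ)| → ρ ^ 2 ∈ S) :
    Tendsto (fun T : ℝ => volume.real (Icc 0 T \ S) / T) atTop (𝓝 0) := by
  refine tendsto_order.mpr ⟨fun a ha => ?_, fun ε hε => ?_⟩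
  · filter_upwards [eventually_ge_atTop 0] with T hT
    exact ha.trans_le (by positivity)
  · obtain ⟨η, hη, hη_le⟩ := exists_between (lt_min one_pos (by positivity : 0 < ε / 72))
    obtain ⟨R, hR⟩ := eventually_atTop.mp (hS (2 * η) (by positivity))
    have hlinear : Tendsto (fun T : ℝ => ε / 2 * T) atTop atTop :=
      tendsto_id.const_mul_atTop (by positivity)
    filter_upwards [hlinear.eventually_gt_atTop (R ^ 2), eventually_ge_atTop 1]
      with T hRT hT
    have hηε : η < ε / 72 := hη_le.trans_le (min_le_right _ _)
    rw [div_lt_iff₀ (by linarith)]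
    calc volume.real (Icc 0 T \ S) ≤ R ^ 2 + 36 * η * T :=
          measureReal_Icc_diff_le hη.le (hη_le.le.trans (min_le_left _ _)) hT hR
      _ < ε * T := by nlinarith

theorem tendsto_measureReal_diff_div_inter {α ι : Type*} [MeasurableSpace α] {μ : Measure α}
    {l : Filter ι} {I : ι → Set α} {S : Set α} (hI : ∀ᶠ i in l, μ.real (I i) ≠ 0)
    (h : Tendsto (fun i => μ.real (I i \ S) / μ.real (I i)) l (𝓝 0)) :
    Tendsto (fun i => μ.real (I i \ S) / μ.real (S ∩ I i)) l (𝓝 0) := by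
  -- Only subadditivity is used, since `S` need not be measurable.
  have hbound : Tendsto ((fun i => μ.real (I i \ S) / μ.real (I i)) /
      fun i => 1 - μ.real (I i \ S) / μ.real (I i)) l (𝓝 0) := by
    simpa only [sub_zero, div_one] using h.div ((tendsto_const_nhds (x := 1)).sub h) (by norm_num)
  refine squeeze_zero' (.of_forall fun i => by positivity) ?_ hbound
  filter_upwards [hI, h.eventually_lt_const one_pos] with i hi hlt
  have hpos : 0 < μ.real (I i) := measureReal_nonneg.lt_of_ne' hi
  have hfinite : μ (I i) ≠ ⊤ := fun htop => hi (by rw [measureReal_def, htop, ENNReal.toReal_top])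
  have hsplit : μ.real (I i) - μ.real (I i \ S) ≤ μ.real (S ∩ I i) := by
    have hcover : I i ⊆ I i \ S ∪ S ∩ I i := by
      rw [inter_comm, sdiff_union_inter]
    linarith [measureReal_union_le (μ := μ) (I i \ S) (S ∩ I i),
      measureReal_mono hcover (by rwa [inter_comm, sdiff_union_inter])]
  have hdiff : 0 < μ.real (I i) - μ.real (I i \ S) := sub_pos.mpr ((div_lt_one hpos).mp hlt)
  calc μ.real (I i \ S) / μ.real (S ∩ I i)
      ≤ μ.real (I i \ S) / (μ.real (I i) - μ.real (I i \ S)) := by gcongr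
    _ = μ.real (I i \ S) / μ.real (I i) / (1 - μ.real (I i \ S) / μ.real (I i)) := by
        field_simp

end Measure

/-- if `m` is odd then the real component of the spectrum of `L(Q)`
contains the main part of `[0, ∞)`:
`μ([0,n] \ σ(L(Q))) / μ(σ(L(Q)) ∩ [0,n]) → 0` as `n → ∞`. -/
theorem statement18 {m : ℕ} (hm : 1 ≤ m) (hmodd : Odd m)
    (Q : ℝ → Matrix (Fin m) (Fin m) ℂ)
    (hQcont : Continuous Q)
    (hQper : ∀ x : ℝ, Q (x + Real.pi) = Q x)
    (hQPT : ∀ (x : ℝ) (i j : Fin m), (starRingEnd ℂ) (Q (-x) i j) = Q x i j) :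
    Filter.Tendsto
      (fun n : ℕ =>
        (volume (Set.Icc (0:ℝ) (n : ℝ) \ {x : ℝ | ((x : ℂ)) ∈ SpecLQ Q})).toReal /
        (volume ({x : ℝ | ((x : ℂ)) ∈ SpecLQ Q} ∩ Set.Icc (0:ℝ) (n : ℝ))).toReal)
      Filter.atTop (nhds 0) := by
  have hspec (δ : ℝ) (hδ : δ > 0) : ∀ᶠ ρ in atTop, δ ≤ |Real.sin (Real.pi * ρ)| →
      ρ ^ 2 ∈ {x : ℝ | (x : ℂ) ∈ SpecLQ Q} :=
    eventually_sq_mem_specLQ hmodd hQcont hQper (fun x => Matrix.ext (hQPT x)) hδ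
  have hlength (n : ℕ) : volume.real (Icc (0 : ℝ) n) = n := by
    rw [Real.volume_real_Icc_of_le n.cast_nonneg, sub_zero]
  refine tendsto_measureReal_diff_div_inter ?_ ?_
  · filter_upwards [eventually_ne_atTop 0] with n hn
    rwa [hlength, Nat.cast_ne_zero]
  · simpa only [hlength, Function.comp_def] using
      (tendsto_measureReal_Icc_diff_div hspec).comp tendsto_natCast_atTop_atTop
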